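/- Let f = (f_0, …, f_4) be a holomorphic solution of the A_4^(1) system with parameters α on an open set U ⊂ ℂ with f_0 nonvanishing on U, and define u_0 = 1/f_0, u_1 = f_0(α_1 − f_0 f_1), u_2 = f_0 + f_2 − u_0, u_3 = f_3, u_4 = (f_0 + f_1 + f_2 + f_3 + f_4) − (u_0 + u_1 + u_2 + u_3). Then on U the functions (u_0, …, u_4) satisfy: u_0' = 2u_0^3 u_1 − (α_0 + 2α_1 − 1)u_0^2 + (u_1 + u_2 − u_3 + u_4)u_0 − 1; u_1' = −3u_0^2 u_1^2 + (2α_0 + 4α_1 − 1)u_0 u_1 − (u_1 + u_2 − u_3 + u_4)u_1 − (α_0 + α_1)α_1; u_2' = −2u_0^3 u_1 + (α_0 + 2α_1 − 1)u_0^2 − (u_1 + u_2 − u_3 + u_4)u_0 + (u_3 − u_4 − u_1)(u_0 + u_2) − 2u_0 u_1 + α_0 + 2α_1 + α_2 + 1; u_3' = (u_4 − u_0 + u_1 − u_2)u_3 + α_3; u_4' = 3u_0^2 u_1^2 − (2α_0 + 4α_1 − 1)u_0 u_1 + (u_1 + u_2 − u_3 + u_4)u_1 + (α_0 + α_1)α_1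 + (u_4 + u_1)(u_0 + u_2 − u_3) + 2u_0 u_1 + α_4 − α_1. In particular u_0' + u_1' + u_2' + u_3' + u_4' = α_0 + α_1 + α_2 + α_3 + α_4. -/

import Mathlib

/-!
Each `u i` is a rational function of the `f j`, so its derivative follows from the system by the
sum, product and quotient rules. The claimed expressions in the `u i` agree with these derivatives
as rational functions of the `f j` and the `α j`, the only denominators being powers of `f 0`.
Since the formulas for the `u i` are assumed only on `U`, openness of `U` is what allows them to be
differentiated: they hold on a neighbourhood of each point. The last claim reduces to the
conservation law `∑ i, (f i)' = ∑ i, α i`, because `∑ i, u i = ∑ i, f i` on `U`.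
-/


/-- If `f = (f₀,…,f₄)` solves the `A₄⁽¹⁾` system on an open set `U` with `f₀`
nonvanishing, then the coordinates `u₀ = 1/f₀`, `u₁ = f₀(α₁ − f₀f₁)`,
`u₂ = f₀+f₂ − u₀`, `u₃ = f₃`, `u₄ = (f₀+⋯+f₄) − (u₀+u₁+u₂+u₃)` satisfy the
stated polynomial system, and `u₀'+⋯+u₄' = α₀+⋯+α₄`. -/
theorem uCoords_type1_A4 (α : Fin 5 → ℂ) (U : Set ℂ) (hU : IsOpen U)
    (f u : Fin 5 → ℂ → ℂ)
    (hf : ∀ i : Fin 5, ∀ t ∈ U,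
      HasDerivAt (f i)
        (f i t * (f (i + 1) t - f (i + 2) t + f (i + 3) t - f (i + 4) t) + α i) t)
    (hf0 : ∀ t ∈ U, f 0 t ≠ 0)
    (hu0 : ∀ t ∈ U, u 0 t = 1 / f 0 t)
    (hu1 : ∀ t ∈ U, u 1 t = f 0 t * (α 1 - f 0 t * f 1 t))
    (hu2 : ∀ t ∈ U, u 2 t = f 0 t + f 2 t - u 0 t)
    (hu3 : ∀ t ∈ U, u 3 t = f 3 t)
    (hu4 : ∀ t ∈ U, u 4 t =
      f 0 t + f 1 t + f 2 t + f 3 t + f 4 t - (u 0 t + u 1 t + u 2 t + u 3 t)) :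
    ∀ t ∈ U,
      HasDerivAt (u 0)
        (2 * u 0 t ^ 3 * u 1 t - (α 0 + 2 * α 1 - 1) * u 0 t ^ 2 +
          (u 1 t + u 2 t - u 3 t + u 4 t) * u 0 t - 1) t ∧
      HasDerivAt (u 1)
        (-3 * u 0 t ^ 2 * u 1 t ^ 2 + (2 * α 0 + 4 * α 1 - 1) * u 0 t * u 1 t -
          (u 1 t + u 2 t - u 3 t + u 4 t) * u 1 t - (α 0 + α 1) * α 1) t ∧
      HasDerivAt (u 2)
        (-2 * u 0 t ^ 3 * u 1 t + (α 0 + 2 * α 1 - 1) * u 0 t ^ 2 -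
          (u 1 t + u 2 t - u 3 t + u 4 t) * u 0 t +
          (u 3 t - u 4 t - u 1 t) * (u 0 t + u 2 t) - 2 * u 0 t * u 1 t +
          α 0 + 2 * α 1 + α 2 + 1) t ∧
      HasDerivAt (u 3)
        ((u 4 t - u 0 t + u 1 t - u 2 t) * u 3 t + α 3) t ∧
      HasDerivAt (u 4)
        (3 * u 0 t ^ 2 * u 1 t ^ 2 - (2 * α 0 + 4 * α 1 - 1) * u 0 t * u 1 t +
          (u 1 t + u 2 t - u 3 t + u 4 t) * u 1 t + (α 0 + α 1) * α 1 +
          (u 4 t + u 1 t) * (u 0 t + u 2 t - u 3 t) + 2 * u 0 t * u 1 t +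
          α 4 - α 1) t ∧
      HasDerivAt (fun s => u 0 s + u 1 s + u 2 s + u 3 s + u 4 s)
        (α 0 + α 1 + α 2 + α 3 + α 4) t := by
  intro t ht
  have hUt : U ∈ nhds t := hU.mem_nhds ht
  have d0 := hf 0 t ht
  have d1 := hf 1 t ht
  have d2 := hf 2 t ht
  have d3 := hf 3 t ht
  have d4 := hf 4 t ht
  have h0 := hf0 t ht
  have transfer : ∀ {g h : ℂ → ℂ} {a b : ℂ}, HasDerivAt h a t → (∀ s ∈ U, g s = h s) → a = b →
      HasDerivAt g b t := by
    intro g h a b hd hg hab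
    exact hab ▸ hd.congr_of_eventuallyEq (Filter.eventually_of_mem hUt hg)
  -- The reductions of `i + k` in `Fin 5`.
  have e : (1 + 1 : Fin 5) = 2 ∧ (1 + 2 : Fin 5) = 3 ∧ (1 + 3 : Fin 5) = 4 ∧ (1 + 4 : Fin 5) = 0 ∧
      (2 + 1 : Fin 5) = 3 ∧ (2 + 2 : Fin 5) = 4 ∧ (2 + 3 : Fin 5) = 0 ∧ (2 + 4 : Fin 5) = 1 ∧
      (3 + 1 : Fin 5) = 4 ∧ (3 + 2 : Fin 5) = 0 ∧ (3 + 3 : Fin 5) = 1 ∧ (3 + 4 : Fin 5) = 2 ∧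
      (4 + 1 : Fin 5) = 0 ∧ (4 + 2 : Fin 5) = 1 ∧ (4 + 3 : Fin 5) = 2 ∧ (4 + 4 : Fin 5) = 3 := by
    decide
  obtain ⟨e11, e12, e13, e14, e21, e22, e23, e24, e31, e32, e33, e34, e41, e42, e43, e44⟩ := e
  simp only [zero_add] at d0
  rw [e11, e12, e13, e14] at d1
  rw [e21, e22, e23, e24] at d2
  rw [e31, e32, e33, e34] at d3
  rw [e41, e42, e43, e44] at d4
  have v0 := hu0 t ht
  have v1 := hu1 t ht
  have v2 := hu2 t ht
  have v3 := hu3 t ht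
  have v4 := hu4 t ht
  have dsum := (((d0.add d1).add d2).add d3).add d4
  have k0 : HasDerivAt (u 0) _ t :=
    transfer (d0.inv h0) (fun s hs => by simp [hu0 s hs]) rfl
  have k1 : HasDerivAt (u 1) _ t :=
    transfer (d0.mul ((d0.mul d1).const_sub (α 1))) (fun s hs => hu1 s hs) rfl
  have k2 : HasDerivAt (u 2) _ t :=
    transfer ((d0.add d2).sub k0) (fun s hs => hu2 s hs) rfl
  have k3 : HasDerivAt (u 3) _ t := transfer d3 hu3 rfl
  have k4 : HasDerivAt (u 4) _ t :=
    transfer (dsum.sub (((k0.add k1).add k2).add k3)) (fun s hs => hu4 s hs) rfl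
  refine ⟨transfer k0 (fun _ _ => rfl) ?_, transfer k1 (fun _ _ => rfl) ?_,
    transfer k2 (fun _ _ => rfl) ?_, transfer k3 (fun _ _ => rfl) ?_,
    transfer k4 (fun _ _ => rfl) ?_,
    transfer dsum (fun s hs => by simp only [Pi.add_apply]; rw [hu4 s hs]; ring) (by ring)⟩
  all_goals
    try simp only [Pi.mul_apply]
    rw [v4, v3, v2, v1, v0]
    field_simp
    ring
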